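/- arXiv:1710.01108 — 3 statements merged into one kernel-verified Lean document; each statement's English description precedes it below -/
import Mathlib

section
/- Let f, g : I → ℝ be continuous and strictly monotone, and suppose g is strictly increasing. Then A^[f] ≤ A^[g] if and only if g ∘ f⁻¹ is convex on f(I). Likewise, if g is strictly decreasing, then A^[f] ≤ A^[g] if and only if g ∘ f⁻¹ is concave on f(I). -/
/-!
Put `φ = g ∘ f⁻¹` and `J = f(I)`. Since `I` is an interval and `f`, `g` are continuous, `f(I)` and
`g(I)` are intervals, so the means `A^[f](a)`, `A^[g](a)` are genuine preimages lying in `I`.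
Applying the increasing function `g` to `A^[f](a) ≤ A^[g](a)` and writing `bᵢ = f(aᵢ)` turns the
comparison into the equal-weight Jensen inequality
`φ((b₁ + ⋯ + bₙ)/n) ≤ (φ(b₁) + ⋯ + φ(bₙ))/n` for all `n ≥ 1` and `b ∈ Jⁿ`; for decreasing `g` the
inequality is reversed (`qam_le_iff_of_strictMonoOn`, `qam_le_iff_of_strictAntiOn`).

Convexity gives this by Jensen's inequality. Conversely, repeating `x` and `y` among the `bᵢ` gives
the convexity inequality for rational weights, and continuity of `φ` extends it to real weights
(`convexOn_iff_equal_weights`). Continuity of `φ` on `J` is automatic, because `φ` is a strictly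
monotone map of the interval `J` onto the interval `g(I)` (`continuousOn_comp_invFunOn`).
-/

open Set Function Filter

/-- The quasi-arithmetic mean generated by `f` on the interval `I`,
applied to a vector `a ∈ Iⁿ`: `f⁻¹((f a₁ + ⋯ + f aₙ)/n)`, where the
inverse of `f` is taken on `I`. -/
noncomputable def qam (I : Set ℝ) (f : ℝ → ℝ) {n : ℕ} (a : Fin n → ℝ) : ℝ :=
  Function.invFunOn f I ((∑ i, f (a i)) / n)

/-- The natural (pointwise) partial order on quasi-arithmetic means:
`A^[f] ≤ A^[g]` iff `A^[f](a) ≤ A^[g](a)` for every `n ≥ 1` and every `a ∈ Iⁿ`. -/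
def qamLE (I : Set ℝ) (f g : ℝ → ℝ) : Prop :=
  ∀ n : ℕ, 1 ≤ n → ∀ a : Fin n → ℝ, (∀ i, a i ∈ I) → qam I f a ≤ qam I g a

/-- `A^[f] = A^[g]` : equality of the two quasi-arithmetic means as means. -/
def qamEQ (I : Set ℝ) (f g : ℝ → ℝ) : Prop :=
  ∀ n : ℕ, 1 ≤ n → ∀ a : Fin n → ℝ, (∀ i, a i ∈ I) → qam I f a = qam I g a

/-- `f` is strictly monotone on `I` (strictly increasing or strictly decreasing). -/
def StrictMonoOrAntiOn (f : ℝ → ℝ) (I : Set ℝ) : Prop :=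
  StrictMonoOn f I ∨ StrictAntiOn f I

/-- A strictly increasing map of an interval onto an interval is an order isomorphism between them,
hence a homeomorphism for the order topologies. -/
lemma continuousOn_of_strictMonoOn {s : Set ℝ} {φ : ℝ → ℝ} (hs : s.OrdConnected)
    (hφs : (φ '' s).OrdConnected) (h : StrictMonoOn φ s) : ContinuousOn φ s := by
  rw [continuousOn_iff_continuous_domRestrict]
  exact continuous_subtype_val.comp (StrictMonoOn.orderIso φ s h).continuous

lemma continuousOn_of_strictAntiOn {s : Set ℝ} {φ : ℝ → ℝ} (hs : s.OrdConnected)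
    (hφs : (φ '' s).OrdConnected) (h : StrictAntiOn φ s) : ContinuousOn φ s := by
  have himg : (fun x => -φ x) '' s = -(φ '' s) := by
    rw [← Set.image_neg_eq_neg, Set.image_image]
  have key : ContinuousOn (fun x => -φ x) s := by
    refine continuousOn_of_strictMonoOn hs ?_ fun x hx y hy hxy => neg_lt_neg (h hx hy hxy)
    rw [himg]
    exact hφs.convex.neg.ordConnected
  exact key.neg.congr fun x _ => (neg_neg (φ x)).symm

lemma ordConnected_image {I : Set ℝ} {f : ℝ → ℝ} (hI : I.OrdConnected) (hf : ContinuousOn f I) :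
    (f '' I).OrdConnected :=
  (hI.isPreconnected.image f hf).ordConnected

lemma StrictMonoOrAntiOn.injOn {I : Set ℝ} {f : ℝ → ℝ} (h : StrictMonoOrAntiOn f I) :
    InjOn f I :=
  h.elim (fun h => h.injOn) (fun h => h.injOn)

lemma continuousOn_comp_invFunOn {I : Set ℝ} {f g : ℝ → ℝ} (hI : I.OrdConnected)
    (hfc : ContinuousOn f I) (hgc : ContinuousOn g I)
    (hf : StrictMonoOrAntiOn f I) (hg : StrictMonoOrAntiOn g I) :
    ContinuousOn (g ∘ invFunOn f I) (f '' I) := by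
  have hJ := ordConnected_image hI hfc
  have hinv : ∀ x ∈ I, invFunOn f I (f x) = x := fun x hx => hf.injOn.leftInvOn_invFunOn hx
  have himg : ((g ∘ invFunOn f I) '' (f '' I)).OrdConnected := by
    rw [Set.image_image]
    have : (fun x => (g ∘ invFunOn f I) (f x)) '' I = g '' I :=
      Set.image_congr fun x hx => by simp [hinv x hx]
    rw [this]
    exact ordConnected_image hI hgc
  rcases hf with hf | hf <;> rcases hg with hg | hg
  · refine continuousOn_of_strictMonoOn hJ himg ?_
    rintro _ ⟨x, hx, rfl⟩ _ ⟨y, hy, rfl⟩ h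
    simpa [hinv x hx, hinv y hy] using hg hx hy ((hf.lt_iff_lt hx hy).1 h)
  · refine continuousOn_of_strictAntiOn hJ himg ?_
    rintro _ ⟨x, hx, rfl⟩ _ ⟨y, hy, rfl⟩ h
    simpa [hinv x hx, hinv y hy] using hg hx hy ((hf.lt_iff_lt hx hy).1 h)
  · refine continuousOn_of_strictAntiOn hJ himg ?_
    rintro _ ⟨x, hx, rfl⟩ _ ⟨y, hy, rfl⟩ h
    simpa [hinv x hx, hinv y hy] using hg hy hx ((hf.lt_iff_gt hx hy).1 h)
  · refine continuousOn_of_strictMonoOn hJ himg ?_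
    rintro _ ⟨x, hx, rfl⟩ _ ⟨y, hy, rfl⟩ h
    simpa [hinv x hx, hinv y hy] using hg hy hx ((hf.lt_iff_gt hx hy).1 h)

lemma mean_mem {J : Set ℝ} (hJ : Convex ℝ J) {n : ℕ} (hn : 1 ≤ n) {b : Fin n → ℝ}
    (hb : ∀ i, b i ∈ J) : (∑ i, b i) / n ∈ J := by
  have hn' : (n : ℝ) ≠ 0 := by positivity
  have := hJ.sum_mem (t := Finset.univ) (w := fun _ : Fin n => (n : ℝ)⁻¹) (z := b)
    (fun _ _ => by positivity) (by simp [hn']) (fun i _ => hb i)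
  rwa [← Finset.smul_sum, smul_eq_mul, inv_mul_eq_div] at this

lemma sum_fin_ite_lt (n k : ℕ) (hk : k ≤ n) (p q : ℝ) :
    ∑ i : Fin n, (if (i : ℕ) < k then p else q) = k * p + ((n : ℝ) - k) * q := by
  obtain ⟨m, rfl⟩ := Nat.exists_eq_add_of_le hk
  rw [Fin.sum_univ_add]
  simp

/-- For continuous functions, convexity is equivalent to Jensen's inequality with equal weights. -/
lemma convexOn_iff_equal_weights {J : Set ℝ} {φ : ℝ → ℝ} (hJ : Convex ℝ J)
    (hφ : ContinuousOn φ J) :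
    ConvexOn ℝ J φ ↔ ∀ n : ℕ, 1 ≤ n → ∀ b : Fin n → ℝ, (∀ i, b i ∈ J) →
      φ ((∑ i, b i) / n) ≤ (∑ i, φ (b i)) / n := by
  constructor
  · intro h n hn b hb
    have hn' : (n : ℝ) ≠ 0 := by positivity
    have := h.map_sum_le (t := Finset.univ) (w := fun _ : Fin n => (n : ℝ)⁻¹) (p := b)
      (fun _ _ => by positivity) (by simp [hn']) (fun i _ => hb i)
    rwa [← Finset.smul_sum, ← Finset.smul_sum, smul_eq_mul, smul_eq_mul, inv_mul_eq_div,
      inv_mul_eq_div] at this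
  · intro h
    refine ⟨hJ, fun x hx y hy s t hs ht hst => ?_⟩
    obtain rfl : s = 1 - t := by linarith
    have ht1 : t ≤ 1 := by linarith
    -- The weight `t` is the limit of the rational weights `⌊t * n⌋ / n`.
    set u : ℕ → ℝ := fun n => (⌊t * n⌋₊ : ℝ) / n with hu
    have hulim : Tendsto u atTop (nhds t) :=
      (tendsto_nat_floor_mul_div_atTop ht).comp tendsto_natCast_atTop_atTop
    have hk : ∀ n : ℕ, ⌊t * n⌋₊ ≤ n := fun n =>
      Nat.floor_le_of_le (mul_le_of_le_one_left n.cast_nonneg ht1)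
    have hu0 : ∀ n, 0 ≤ u n := fun n => by positivity
    have hu1 : ∀ n, u n ≤ 1 := fun n =>
      div_le_one_of_le₀ (by exact_mod_cast hk n) n.cast_nonneg
    have hmem : ∀ n, (1 - u n) * x + u n * y ∈ J := fun n =>
      hJ hx hy (sub_nonneg.2 (hu1 n)) (hu0 n) (by ring)
    have hineq : ∀ n : ℕ, 1 ≤ n →
        φ ((1 - u n) * x + u n * y) ≤ (1 - u n) * φ x + u n * φ y := by
      intro n hn
      have hn' : (n : ℝ) ≠ 0 := by positivity
      have key := h n hn (fun i => if (i : ℕ) < ⌊t * n⌋₊ then y else x)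
        (fun i => by split_ifs <;> assumption)
      simp only [apply_ite φ, sum_fin_ite_lt n _ (hk n)] at key
      have e : ∀ p q : ℝ, ((⌊t * n⌋₊ : ℝ) * p + ((n : ℝ) - ⌊t * n⌋₊) * q) / n
          = (1 - u n) * q + u n * p := by
        intro p q
        simp only [hu]
        field_simp
        ring
      rwa [e, e] at key
    have hpt : Tendsto (fun n => (1 - u n) * x + u n * y) atTop
        (nhds ((1 - t) * x + t * y)) :=
      ((hulim.const_sub 1).mul_const x).add (hulim.mul_const y)
    have hL : Tendsto (fun n => φ ((1 - u n) * x + u n * y)) atTop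
        (nhds (φ ((1 - t) * x + t * y))) :=
      (hφ _ (hJ hx hy hs ht hst)).tendsto.comp
        (tendsto_nhdsWithin_iff.2 ⟨hpt, Eventually.of_forall hmem⟩)
    have hR : Tendsto (fun n => (1 - u n) * φ x + u n * φ y) atTop
        (nhds ((1 - t) * φ x + t * φ y)) :=
      ((hulim.const_sub 1).mul_const (φ x)).add (hulim.mul_const (φ y))
    exact le_of_tendsto_of_tendsto hL hR ((eventually_ge_atTop 1).mono hineq)

lemma concaveOn_iff_equal_weights {J : Set ℝ} {φ : ℝ → ℝ} (hJ : Convex ℝ J)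
    (hφ : ContinuousOn φ J) :
    ConcaveOn ℝ J φ ↔ ∀ n : ℕ, 1 ≤ n → ∀ b : Fin n → ℝ, (∀ i, b i ∈ J) →
      (∑ i, φ (b i)) / n ≤ φ ((∑ i, b i) / n) := by
  rw [← neg_convexOn_iff, convexOn_iff_equal_weights hJ hφ.neg]
  simp only [Pi.neg_apply, Finset.sum_neg_distrib, neg_div, neg_le_neg_iff]

/-- On an interval, the mean of the values `f (a i)` is again a value of `f`, so `qam` takes no
junk value. -/
lemma qam_spec {I : Set ℝ} {f : ℝ → ℝ} (hI : I.OrdConnected) (hf : ContinuousOn f I)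
    {n : ℕ} (hn : 1 ≤ n) {a : Fin n → ℝ} (ha : ∀ i, a i ∈ I) :
    qam I f a ∈ I ∧ f (qam I f a) = (∑ i, f (a i)) / n := by
  have h : (∑ i, f (a i)) / n ∈ f '' I :=
    mean_mem (ordConnected_image hI hf).convex hn fun i => mem_image_of_mem f (ha i)
  exact ⟨invFunOn_mem h, invFunOn_eq h⟩

lemma qam_le_iff_of_strictMonoOn {I : Set ℝ} {f g : ℝ → ℝ} (hI : I.OrdConnected)
    (hfc : ContinuousOn f I) (hgc : ContinuousOn g I) (hg : StrictMonoOn g I)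
    {n : ℕ} (hn : 1 ≤ n) {a : Fin n → ℝ} (ha : ∀ i, a i ∈ I) :
    qam I f a ≤ qam I g a ↔
      (g ∘ invFunOn f I) ((∑ i, f (a i)) / n) ≤ (∑ i, g (a i)) / n := by
  obtain ⟨hgm, hge⟩ := qam_spec hI hgc hn ha
  rw [← hg.le_iff_le (qam_spec hI hfc hn ha).1 hgm, hge]
  rfl

lemma qam_le_iff_of_strictAntiOn {I : Set ℝ} {f g : ℝ → ℝ} (hI : I.OrdConnected)
    (hfc : ContinuousOn f I) (hgc : ContinuousOn g I) (hg : StrictAntiOn g I)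
    {n : ℕ} (hn : 1 ≤ n) {a : Fin n → ℝ} (ha : ∀ i, a i ∈ I) :
    qam I f a ≤ qam I g a ↔
      (∑ i, g (a i)) / n ≤ (g ∘ invFunOn f I) ((∑ i, f (a i)) / n) := by
  obtain ⟨hgm, hge⟩ := qam_spec hI hgc hn ha
  rw [← hg.le_iff_ge hgm (qam_spec hI hfc hn ha).1, hge]
  rfl

/-- The substitution `b i = f (a i)`: quantifying over vectors in `f '' I` and their images under
`g ∘ f⁻¹` is the same as quantifying over vectors in `I`. -/
lemma forall_image_vector_iff {I : Set ℝ} {f g : ℝ → ℝ} (hf : InjOn f I) {n : ℕ}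
    (P : (Fin n → ℝ) → (Fin n → ℝ) → Prop) :
    (∀ b : Fin n → ℝ, (∀ i, b i ∈ f '' I) → P b fun i => (g ∘ invFunOn f I) (b i)) ↔
      ∀ a : Fin n → ℝ, (∀ i, a i ∈ I) → P (fun i => f (a i)) fun i => g (a i) := by
  constructor
  · intro h a ha
    have := h (fun i => f (a i)) fun i => mem_image_of_mem f (ha i)
    simpa only [comp_apply, hf.leftInvOn_invFunOn (ha _)] using this
  · intro h b hb
    have := h (fun i => invFunOn f I (b i)) fun i => invFunOn_mem (hb i)
    simpa only [comp_apply, invFunOn_eq (hb _)] using this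

/-- For continuous strictly monotone `f g : I → ℝ`, if `g` is strictly
increasing then `A^[f] ≤ A^[g] ↔ g ∘ f⁻¹` is convex on `f(I)`; if `g` is strictly
decreasing then `A^[f] ≤ A^[g] ↔ g ∘ f⁻¹` is concave on `f(I)`. -/
theorem comparison_iff_convexity_of_g_comp_finv
    (I : Set ℝ) (hI : I.OrdConnected) (hInontriv : ∃ x ∈ I, ∃ y ∈ I, x < y)
    (f g : ℝ → ℝ) (hfc : ContinuousOn f I) (hgc : ContinuousOn g I)
    (hfm : StrictMonoOrAntiOn f I) :
    (StrictMonoOn g I →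
      (qamLE I f g ↔ ConvexOn ℝ (f '' I) (g ∘ Function.invFunOn f I))) ∧
    (StrictAntiOn g I →
      (qamLE I f g ↔ ConcaveOn ℝ (f '' I) (g ∘ Function.invFunOn f I))) := by
  have hJ : Convex ℝ (f '' I) := (ordConnected_image hI hfc).convex
  refine ⟨fun hg => ?_, fun hg => ?_⟩
  · rw [convexOn_iff_equal_weights hJ (continuousOn_comp_invFunOn hI hfc hgc hfm (Or.inl hg))]
    refine forall₂_congr fun n hn => ?_
    rw [forall_image_vector_iff hfm.injOn
      fun b c => (g ∘ invFunOn f I) ((∑ i, b i) / n) ≤ (∑ i, c i) / n]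
    exact forall₂_congr fun a ha => qam_le_iff_of_strictMonoOn hI hfc hgc hg hn ha
  · rw [concaveOn_iff_equal_weights hJ (continuousOn_comp_invFunOn hI hfc hgc hfm (Or.inr hg))]
    refine forall₂_congr fun n hn => ?_
    rw [forall_image_vector_iff hfm.injOn
      fun b c => (∑ i, c i) / n ≤ (g ∘ invFunOn f I) ((∑ i, b i) / n)]
    exact forall₂_congr fun a ha => qam_le_iff_of_strictAntiOn hI hfc hgc hg hn ha
end

section
/- Let f, g : I → ℝ be continuous and strictly monotone, and suppose f is strictly increasing. Then A^[f] ≤ A^[g] if and only if f ∘ g⁻¹ is concave on g(I). Likewise, if f is strictly decreasing, then A^[f] ≤ A^[g] if and only if f ∘ g⁻¹ is convex on g(I). -/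
/-!
Write `φ = f ∘ g⁻¹`. Applying `f` to both sides of `A^[f](a) ≤ A^[g](a)` turns the comparison of
means into Jensen's inequality with equal weights for `φ` when `f` is increasing, and for `-φ` when
`f` is decreasing (`qamLE_iff_of_strictMonoOn`, `qamLE_iff_of_strictAntiOn`). It remains to see that
Jensen's inequality with equal weights is equivalent to concavity (`jensen_iff_concaveOn`), which
for a continuous `f` needs no monotonicity of `f`.

One direction is the finite Jensen inequality. For the other, repeating entries gives Jensen's
inequality for two points with rational weights. To reach real weights, the weight is parametrized
by the intermediate point `w` through `s(w) = (g y - g w) / (g y - g x)`: this function is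
continuous and injective, so it takes rational values arbitrarily close to any given point, and the
inequality extends by continuity of `f` and `g`. In this way continuity of `g⁻¹` is not needed.
-/

open Set Function Filter

/-- Jensen's inequality with equal weights for `f ∘ g⁻¹`, expressed on `I` without the inverse:
`z` is the `g`-mean of the `a i`. -/
def EqualWeightJensen (I : Set ℝ) (f g : ℝ → ℝ) : Prop :=
  ∀ n : ℕ, 1 ≤ n → ∀ a : Fin n → ℝ, (∀ i, a i ∈ I) → ∀ z ∈ I,
    g z = (∑ i, g (a i)) / n → (∑ i, f (a i)) / n ≤ f z

lemma convex_image_of_continuousOn {I : Set ℝ} (hI : I.OrdConnected) {f : ℝ → ℝ}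
    (hf : ContinuousOn f I) : Convex ℝ (f '' I) :=
  (hI.isPreconnected.image f hf).ordConnected.convex

lemma average_mem_image {I : Set ℝ} (hI : I.OrdConnected) {f : ℝ → ℝ}
    (hf : ContinuousOn f I) {n : ℕ} (hn : 1 ≤ n) {a : Fin n → ℝ} (ha : ∀ i, a i ∈ I) :
    (∑ i, f (a i)) / n ∈ f '' I := by
  have hn0 : (n : ℝ) ≠ 0 := by positivity
  have h := (convex_image_of_continuousOn hI hf).sum_mem (t := Finset.univ)
    (w := fun _ : Fin n => (n : ℝ)⁻¹) (z := fun i => f (a i))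
    (fun _ _ => by positivity) (by simp [hn0]) (fun i _ => mem_image_of_mem f (ha i))
  rw [← Finset.smul_sum, smul_eq_mul] at h
  rwa [div_eq_inv_mul]

lemma qam_mem {I : Set ℝ} (hI : I.OrdConnected) {f : ℝ → ℝ}
    (hf : ContinuousOn f I) {n : ℕ} (hn : 1 ≤ n) {a : Fin n → ℝ} (ha : ∀ i, a i ∈ I) :
    qam I f a ∈ I :=
  invFunOn_mem (average_mem_image hI hf hn ha)

lemma apply_qam {I : Set ℝ} (hI : I.OrdConnected) {f : ℝ → ℝ}
    (hf : ContinuousOn f I) {n : ℕ} (hn : 1 ≤ n) {a : Fin n → ℝ} (ha : ∀ i, a i ∈ I) :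
    f (qam I f a) = (∑ i, f (a i)) / n :=
  invFunOn_eq (average_mem_image hI hf hn ha)

lemma qamLE_iff_of_strictMonoOn {I : Set ℝ} (hI : I.OrdConnected) {f g : ℝ → ℝ}
    (hfc : ContinuousOn f I) (hgc : ContinuousOn g I) (hg : InjOn g I) (hf : StrictMonoOn f I) :
    qamLE I f g ↔ EqualWeightJensen I f g := by
  constructor
  · intro h n hn a ha z hz hgz
    have hz' : qam I g a = z :=
      hg (qam_mem hI hgc hn ha) hz ((apply_qam hI hgc hn ha).trans hgz.symm)
    have hle := (hf.le_iff_le (qam_mem hI hfc hn ha) (qam_mem hI hgc hn ha)).2 (h n hn a ha)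
    rwa [apply_qam hI hfc hn ha, hz'] at hle
  · intro h n hn a ha
    rw [← hf.le_iff_le (qam_mem hI hfc hn ha) (qam_mem hI hgc hn ha), apply_qam hI hfc hn ha]
    exact h n hn a ha _ (qam_mem hI hgc hn ha) (apply_qam hI hgc hn ha)

lemma qamLE_iff_of_strictAntiOn {I : Set ℝ} (hI : I.OrdConnected) {f g : ℝ → ℝ}
    (hfc : ContinuousOn f I) (hgc : ContinuousOn g I) (hg : InjOn g I) (hf : StrictAntiOn f I) :
    qamLE I f g ↔ EqualWeightJensen I (-f) g := by
  have hsum : ∀ (n : ℕ) (a : Fin n → ℝ) (z : ℝ),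
      (∑ i, (-f) (a i)) / n ≤ (-f) z ↔ f z ≤ (∑ i, f (a i)) / n := by
    intro n a z
    simp only [Pi.neg_apply, Finset.sum_neg_distrib, neg_div, neg_le_neg_iff]
  constructor
  · intro h n hn a ha z hz hgz
    have hz' : qam I g a = z :=
      hg (qam_mem hI hgc hn ha) hz ((apply_qam hI hgc hn ha).trans hgz.symm)
    have hle := (hf.le_iff_ge (qam_mem hI hgc hn ha) (qam_mem hI hfc hn ha)).2 (h n hn a ha)
    rw [apply_qam hI hfc hn ha, hz'] at hle
    exact (hsum n a z).2 hle
  · intro h n hn a ha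
    rw [← hf.le_iff_ge (qam_mem hI hgc hn ha) (qam_mem hI hfc hn ha), apply_qam hI hfc hn ha]
    exact (hsum n a _).1 (h n hn a ha _ (qam_mem hI hgc hn ha) (apply_qam hI hgc hn ha))

/-- Two-point Jensen with weights `p / (p + q)` and `q / (p + q)`, obtained by repeating `x`
and `y`. -/
lemma EqualWeightJensen.two_points {I : Set ℝ} {f g : ℝ → ℝ} (h : EqualWeightJensen I f g)
    {x y w : ℝ} (hx : x ∈ I) (hy : y ∈ I) (hw : w ∈ I) {p q : ℕ} (hpq : 1 ≤ p + q)
    (hgw : g w = (p * g x + q * g y) / (p + q : ℕ)) :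
    (p * f x + q * f y) / (p + q : ℕ) ≤ f w := by
  have hsum : ∀ k : ℝ → ℝ,
      ∑ i, k (Fin.append (fun _ : Fin p => x) (fun _ : Fin q => y) i) = p * k x + q * k y := by
    intro k
    simp [Fin.sum_univ_add]
  have := h (p + q) hpq (Fin.append (fun _ : Fin p => x) (fun _ : Fin q => y))
    (fun i => by induction i using Fin.addCases <;> simpa) w hw (by rw [hsum g, hgw])
  rwa [hsum f] at this

lemma EqualWeightJensen.two_points_rat {I : Set ℝ} {f g : ℝ → ℝ} (h : EqualWeightJensen I f g)
    {x y w : ℝ} (hx : x ∈ I) (hy : y ∈ I) (hw : w ∈ I) {r : ℚ} (h0 : 0 ≤ r) (h1 : r ≤ 1)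
    (hgw : g w = (1 - r) * g y + r * g x) :
    (1 - r) * f y + r * f x ≤ f w := by
  obtain ⟨p, hp⟩ := Int.eq_ofNat_of_zero_le (Rat.num_nonneg.2 h0)
  have hr : (r : ℝ) = p / r.den := by
    rw [Rat.cast_def, hp]; simp
  have hd : (0 : ℝ) < r.den := by exact_mod_cast r.den_pos
  have hle : p ≤ r.den := by
    have : (r : ℝ) ≤ 1 := by exact_mod_cast h1
    rw [hr, div_le_one hd] at this
    exact_mod_cast this
  obtain ⟨q, hq⟩ := Nat.exists_eq_add_of_le hle
  have hpos := r.den_pos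
  rw [hq] at hr hd hpos
  have hcomb : ∀ u v : ℝ, (1 - r) * v + r * u = (p * u + q * v) / (p + q : ℕ) := by
    intro u v
    rw [hr]
    field_simp
    push_cast
    ring
  rw [hcomb] at hgw ⊢
  exact h.two_points hx hy hw hpos hgw

/-- Passage from rational to real weights. -/
lemma EqualWeightJensen.two_points_real {I : Set ℝ} (hI : I.OrdConnected) {f g : ℝ → ℝ}
    (hfc : ContinuousOn f I) (hgc : ContinuousOn g I) (hgm : StrictMonoOrAntiOn g I)
    (h : EqualWeightJensen I f g) {x y z : ℝ} (hx : x ∈ I) (hy : y ∈ I) (hxz : x < z)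
    (hzy : z < y) :
    (g z - g x) / (g y - g x) * f y + (g y - g z) / (g y - g x) * f x ≤ f z := by
  have hsub : Icc x y ⊆ I := hI.out hx hy
  have hne : g y - g x ≠ 0 := fun h0 =>
    (hxz.trans hzy).ne (hgm.injOn hx hy (sub_eq_zero.1 h0).symm)
  have hz : z ∈ I := hsub ⟨hxz.le, hzy.le⟩
  set s : ℝ → ℝ := fun w => (g y - g w) / (g y - g x) with hs
  have hsc : ContinuousOn s (Icc x y) := (continuousOn_const.sub (hgc.mono hsub)).div_const _
  have hsI : ∀ w ∈ Icc x y, 0 ≤ s w ∧ s w ≤ 1 := by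
    intro w hw
    have hwI := hsub hw
    rcases hgm with hm | hm
    · have h1 := hm.monotoneOn hx hwI hw.1
      have h2 := hm.monotoneOn hwI hy hw.2
      exact ⟨div_nonneg (by linarith) (by linarith), div_le_one_of_le₀ (by linarith) (by linarith)⟩
    · have h1 := hm.antitoneOn hx hwI hw.1
      have h2 := hm.antitoneOn hwI hy hw.2
      exact ⟨div_nonneg_of_nonpos (by linarith) (by linarith),
        div_le_one_of_ge (by linarith) (by linarith)⟩
  have hsinj : ∀ u ∈ I, ∀ v ∈ I, s u = s v → u = v := by
    intro u hu v hv huv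
    apply hgm.injOn hu hv
    have := (div_left_inj' hne).1 huv
    linarith
  have h1s : ∀ w, (g w - g x) / (g y - g x) = 1 - s w := by
    intro w
    simp only [hs]
    field_simp
    ring
  rw [h1s]
  change (1 - s z) * f y + s z * f x ≤ f z
  by_contra! hlt
  have hF : ContinuousOn (fun w => (1 - s w) * f y + s w * f x - f w) (Icc x y) :=
    (((continuousOn_const.sub hsc).mul continuousOn_const).add
      (hsc.mul continuousOn_const)).sub (hfc.mono hsub)
  have hev := (hF.continuousAt (Icc_mem_nhds hxz hzy)).eventually_const_lt
    (show (0 : ℝ) < (1 - s z) * f y + s z * f x - f z by linarith)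
  obtain ⟨ε, hε, hball⟩ := Metric.eventually_nhds_iff.1 hev
  -- `[z, v]` is a nondegenerate interval in `[x, y]` on which the strict reverse inequality holds.
  set v := min y (z + ε / 2) with hv
  have hzv : z < v := lt_min hzy (by linarith)
  have hvy : v ≤ y := min_le_left _ _
  have hvε : v ≤ z + ε / 2 := min_le_right _ _
  have hsub' : Icc z v ⊆ Icc x y := Icc_subset_Icc hxz.le hvy
  have hsne : s z ≠ s v := fun he =>
    hzv.ne (hsinj z hz v (hsub (hsub' (right_mem_Icc.2 hzv.le))) he)
  obtain ⟨r, hr1, hr2⟩ := exists_rat_btwn (min_lt_max.2 hsne)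
  obtain ⟨w, hw, hwr⟩ : (r : ℝ) ∈ s '' Icc z v := by
    have := intermediate_value_uIcc (f := s) (a := z) (b := v)
      (by rw [uIcc_of_le hzv.le]; exact hsc.mono hsub')
    rw [uIcc_of_le hzv.le] at this
    exact this ⟨hr1.le, hr2.le⟩
  have hwxy := hsub' hw
  obtain ⟨h0, h1⟩ := hsI w hwxy
  rw [hwr] at h0 h1
  have hgw : g w = (1 - r) * g y + r * g x := by
    rw [← hwr]
    simp only [hs]
    field_simp
    ring
  have hle := h.two_points_rat hx hy (hsub hwxy) (by exact_mod_cast h0) (by exact_mod_cast h1) hgw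
  have hgt := hball (y := w) (by
    rw [Real.dist_eq, abs_of_nonneg (by linarith [hw.1])]
    linarith [hw.2])
  rw [hwr] at hgt
  linarith

lemma jensen_iff_concaveOn {I : Set ℝ} (hI : I.OrdConnected) {f g : ℝ → ℝ}
    (hfc : ContinuousOn f I) (hgc : ContinuousOn g I) (hgm : StrictMonoOrAntiOn g I) :
    EqualWeightJensen I f g ↔ ConcaveOn ℝ (g '' I) (f ∘ invFunOn g I) := by
  have hinv : ∀ x ∈ I, invFunOn g I (g x) = x := fun x hx => hgm.injOn.leftInvOn_invFunOn hx
  constructor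
  · intro h
    refine ⟨convex_image_of_continuousOn hI hgc, ?_⟩
    rintro _ ⟨x, hx, rfl⟩ _ ⟨y, hy, rfl⟩ a b ha hb hab
    obtain ⟨z, hz, hgz⟩ := convex_image_of_continuousOn hI hgc (mem_image_of_mem g hx)
      (mem_image_of_mem g hy) ha hb hab
    rw [← hgz]
    simp only [comp_apply, hinv x hx, hinv y hy, hinv z hz, smul_eq_mul] at hgz ⊢
    obtain rfl : a = 1 - b := by linarith
    -- The degenerate cases, where `z` is an endpoint, are treated apart from `z` strictly between.
    rcases eq_or_ne (g x) (g y) with hxy | hxy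
    · have h1 : x = y := hgm.injOn hx hy hxy
      have h2 : z = x := hgm.injOn hz hx (by rw [hgz, ← hxy]; ring)
      subst h1 h2
      linarith
    rcases hb.eq_or_lt with rfl | hb
    · have h2 : z = x := hgm.injOn hz hx (by rw [hgz]; ring)
      subst h2
      linarith
    rcases ha.eq_or_lt with ha | ha
    · obtain rfl : b = 1 := by linarith
      have h2 : z = y := hgm.injOn hz hy (by rw [hgz]; ring)
      subst h2
      linarith
    have hd : g y - g x ≠ 0 := sub_ne_zero.2 hxy.symm
    have hd' : g x - g y ≠ 0 := sub_ne_zero.2 hxy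
    have hbet : (x < z ∧ z < y) ∨ (y < z ∧ z < x) := by
      rcases lt_or_gt_of_ne hxy with hlt | hlt
      · have h1 : g x < g z := by rw [hgz]; nlinarith
        have h2 : g z < g y := by rw [hgz]; nlinarith
        rcases hgm with hm | hm
        · exact .inl ⟨(hm.lt_iff_lt hx hz).1 h1, (hm.lt_iff_lt hz hy).1 h2⟩
        · exact .inr ⟨(hm.lt_iff_gt hz hy).1 h2, (hm.lt_iff_gt hx hz).1 h1⟩
      · have h1 : g z < g x := by rw [hgz]; nlinarith
        have h2 : g y < g z := by rw [hgz]; nlinarith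
        rcases hgm with hm | hm
        · exact .inr ⟨(hm.lt_iff_lt hy hz).1 h2, (hm.lt_iff_lt hz hx).1 h1⟩
        · exact .inl ⟨(hm.lt_iff_gt hz hx).1 h1, (hm.lt_iff_gt hy hz).1 h2⟩
    rcases hbet with ⟨h1, h2⟩ | ⟨h1, h2⟩
    · have := h.two_points_real hI hfc hgc hgm hx hy h1 h2
      have e1 : (g z - g x) / (g y - g x) = b := by rw [hgz]; field_simp; ring
      have e2 : (g y - g z) / (g y - g x) = 1 - b := by rw [hgz]; field_simp; ring
      rw [e1, e2] at this
      linarith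
    · have := h.two_points_real hI hfc hgc hgm hy hx h1 h2
      have e1 : (g z - g y) / (g x - g y) = 1 - b := by rw [hgz]; field_simp; ring
      have e2 : (g x - g z) / (g x - g y) = b := by rw [hgz]; field_simp; ring
      rw [e1, e2] at this
      linarith
  · intro h n hn a ha z hz hgz
    have hn0 : (n : ℝ) ≠ 0 := by positivity
    have hJ := h.le_map_sum (t := Finset.univ) (w := fun _ : Fin n => (n : ℝ)⁻¹)
      (p := fun i => g (a i)) (fun _ _ => by positivity) (by simp [hn0])
      (fun i _ => mem_image_of_mem g (ha i))
    rw [← Finset.smul_sum, ← Finset.smul_sum, smul_eq_mul, smul_eq_mul, ← div_eq_inv_mul,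
      ← div_eq_inv_mul, ← hgz] at hJ
    simpa only [comp_apply, hinv z hz, hinv _ (ha _)] using hJ

/-- For continuous strictly monotone `f g : I → ℝ`, if `f` is strictly
increasing then `A^[f] ≤ A^[g] ↔ f ∘ g⁻¹` is concave on `g(I)`; if `f` is strictly
decreasing then `A^[f] ≤ A^[g] ↔ f ∘ g⁻¹` is convex on `g(I)`. -/
theorem comparison_iff_concavity_of_f_comp_ginv
    (I : Set ℝ) (hI : I.OrdConnected) (hInontriv : ∃ x ∈ I, ∃ y ∈ I, x < y)
    (f g : ℝ → ℝ) (hfc : ContinuousOn f I) (hgc : ContinuousOn g I)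
    (hgm : StrictMonoOrAntiOn g I) :
    (StrictMonoOn f I →
      (qamLE I f g ↔ ConcaveOn ℝ (g '' I) (f ∘ Function.invFunOn g I))) ∧
    (StrictAntiOn f I →
      (qamLE I f g ↔ ConvexOn ℝ (g '' I) (f ∘ Function.invFunOn g I))) := by
  refine ⟨fun hf => ?_, fun hf => ?_⟩
  · rw [qamLE_iff_of_strictMonoOn hI hfc hgc hgm.injOn hf, jensen_iff_concaveOn hI hfc hgc hgm]
  · rw [qamLE_iff_of_strictAntiOn hI hfc hgc hgm.injOn hf, jensen_iff_concaveOn hI hfc.neg hgc hgm,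
      ← neg_concaveOn_iff]
    rfl
end

section
/- (Mikusiński) Let f, g : I → ℝ be strictly monotone and twice continuously differentiable with f'(x) ≠ 0 and g'(x) ≠ 0 for all x ∈ I. Then A^[f] ≤ A^[g] if and only if f''(x)/f'(x) ≤ g''(x)/g'(x) for all x ∈ I. -/
/-!
By Cauchy's mean value theorem, `g x - g m = (g' ξ / f' ξ) * (f x - f m)` for some `ξ` strictly
between `m` and `x`. The derivative of `g' / f'` has the sign of `g'' / g' - f'' / f'` once `f'`
and `g'` are positive (which may be arranged by replacing `f` or `g` by its
negative; this does not change the means).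

If `f'' / f' ≤ g'' / g'`, then `g' / f'` is nondecreasing, hence
`g x - g m ≥ (g' m / f' m) * (f x - f m)` for all `x ∈ I`. With `m = A^[f](a)`, averaging over
`x = aᵢ` makes the right-hand side vanish, so `g m` is at most the average of the `g (aᵢ)`, that
is, `m ≤ A^[g](a)`.

If the inequality fails at `x₀`, it fails strictly on a neighbourhood of `x₀` in `I` by continuity,
so there `g' / f'` is strictly decreasing, and the same argument with reversed strict inequalities
gives `A^[g](x₀, z) < A^[f](x₀, z)` for any `z ≠ x₀` in that neighbourhood.
-/

open Set Function Filter

/-- The comparison `A^[f] ≤ A^[g]` with the means described implicitly: `m` is the `f`-mean of `a`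
when `f m` is the average of the `f (a i)`. This form is visibly invariant under rescaling `f` or
`g` by a nonzero constant. -/
def ImplicitMeanLE (I : Set ℝ) (f g : ℝ → ℝ) : Prop :=
  ∀ n : ℕ, 1 ≤ n → ∀ a : Fin n → ℝ, (∀ i, a i ∈ I) → ∀ m ∈ I, ∀ k ∈ I,
    n * f m = ∑ i, f (a i) → n * g k = ∑ i, g (a i) → m ≤ k

lemma exists_mean {I : Set ℝ} (hI : I.OrdConnected) {f : ℝ → ℝ} (hf : ContinuousOn f I)
    {n : ℕ} (hn : 1 ≤ n) {a : Fin n → ℝ} (ha : ∀ i, a i ∈ I) :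
    ∃ m ∈ I, f m = (∑ i, f (a i)) / n := by
  have hn0 : (n : ℝ) ≠ 0 := by positivity
  have hc : Convex ℝ (f '' I) :=
    (hI.isPreconnected.image f hf).ordConnected.convex
  have h := hc.sum_mem (t := Finset.univ) (w := fun _ : Fin n => (n : ℝ)⁻¹)
    (z := fun i => f (a i)) (fun _ _ => by positivity)
    (by simp [hn0]) (fun i _ => mem_image_of_mem f (ha i))
  obtain ⟨m, hm, h⟩ := h
  refine ⟨m, hm, ?_⟩
  rw [h, Finset.sum_div]
  exact Finset.sum_congr rfl fun i _ => by simp [div_eq_inv_mul]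

lemma qamLE_iff_implicitMeanLE {I : Set ℝ} (hI : I.OrdConnected) {f g : ℝ → ℝ}
    (hf : ContinuousOn f I) (hg : ContinuousOn g I) (hfi : InjOn f I) (hgi : InjOn g I) :
    qamLE I f g ↔ ImplicitMeanLE I f g := by
  have key : ∀ {h : ℝ → ℝ}, InjOn h I → ∀ {n : ℕ}, 1 ≤ n → ∀ {a : Fin n → ℝ}, ∀ {m : ℝ}, m ∈ I →
      n * h m = ∑ i, h (a i) → qam I h a = m := by
    intro h hi n hn a m hm he
    have hn0 : (n : ℝ) ≠ 0 := by positivity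
    have he' : (∑ i, h (a i)) / n = h m := by rw [← he]; field_simp
    have hex : ∃ x ∈ I, h x = (∑ i, h (a i)) / n := ⟨m, hm, he'.symm⟩
    exact hi (invFunOn_mem hex) hm ((invFunOn_eq hex).trans he')
  constructor
  · intro H n hn a ha m hm k hk h1 h2
    have := H n hn a ha
    rwa [key hfi hn hm h1, key hgi hn hk h2] at this
  · intro H n hn a ha
    have hn0 : (n : ℝ) ≠ 0 := by positivity
    obtain ⟨m, hm, h1⟩ := exists_mean hI hf hn ha
    obtain ⟨k, hk, h2⟩ := exists_mean hI hg hn ha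
    have h1' : n * f m = ∑ i, f (a i) := by rw [h1]; field_simp
    have h2' : n * g k = ∑ i, g (a i) := by rw [h2]; field_simp
    rw [key hfi hn hm h1', key hgi hn hk h2']
    exact H n hn a ha m hm k hk h1' h2'

lemma implicitMeanLE_mul_iff {I : Set ℝ} {f g : ℝ → ℝ} {c d : ℝ} (hc : c ≠ 0) (hd : d ≠ 0) :
    ImplicitMeanLE I (fun x => c * f x) (fun x => d * g x) ↔ ImplicitMeanLE I f g := by
  have key : ∀ {e : ℝ}, e ≠ 0 → ∀ (h : ℝ → ℝ) (n : ℕ) (a : Fin n → ℝ) (m : ℝ),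
      (n * (e * h m) = ∑ i, e * h (a i) ↔ n * h m = ∑ i, h (a i)) := by
    intro e he h n a m
    rw [← Finset.mul_sum, mul_left_comm, mul_right_inj' he]
  simp only [ImplicitMeanLE, key hc, key hd]

lemma hasDerivAt_of_mem_Ioo {I : Set ℝ} (hI : I.OrdConnected) {f f' : ℝ → ℝ}
    (hf : ∀ x ∈ I, HasDerivWithinAt f (f' x) I x) {a b x : ℝ} (ha : a ∈ I) (hb : b ∈ I)
    (hx : x ∈ Ioo a b) : HasDerivAt f (f' x) x :=
  (hf x (hI.out ha hb (Ioo_subset_Icc_self hx))).hasDerivAt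
    (mem_of_superset (Ioo_mem_nhds hx.1 hx.2) (Ioo_subset_Icc_self.trans (hI.out ha hb)))

lemma strictMonoOn_of_deriv_within_pos {I : Set ℝ} (hI : I.OrdConnected) {f f' : ℝ → ℝ}
    (hf : ∀ x ∈ I, HasDerivWithinAt f (f' x) I x) (hpos : ∀ x ∈ I, 0 < f' x) :
    StrictMonoOn f I :=
  strictMonoOn_of_hasDerivWithinAt_pos hI.convex (fun x hx => (hf x hx).continuousWithinAt)
    (fun x hx => (hf x (interior_subset hx)).mono interior_subset)
    (fun x hx => hpos x (interior_subset hx))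

/-- Cauchy's mean value theorem on an interval, for `m < x`. -/
lemma exists_ratio_eq {I : Set ℝ} (hI : I.OrdConnected) {f g f' g' : ℝ → ℝ}
    (hf : ∀ x ∈ I, HasDerivWithinAt f (f' x) I x) (hg : ∀ x ∈ I, HasDerivWithinAt g (g' x) I x)
    (hpos : ∀ x ∈ I, 0 < f' x) {m x : ℝ} (hm : m ∈ I) (hx : x ∈ I) (hlt : m < x) :
    ∃ ξ ∈ I, m < ξ ∧ ξ < x ∧ g x - g m = g' ξ / f' ξ * (f x - f m) := by
  have hsub := hI.out hm hx
  obtain ⟨ξ, hξ, h⟩ := exists_ratio_hasDerivAt_eq_ratio_slope f f' hlt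
    (fun y hy => (hf y (hsub hy)).continuousWithinAt.mono hsub)
    (fun y hy => hasDerivAt_of_mem_Ioo hI hf hm hx hy) g g'
    (fun y hy => (hg y (hsub hy)).continuousWithinAt.mono hsub)
    (fun y hy => hasDerivAt_of_mem_Ioo hI hg hm hx hy)
  have hξI := hsub (Ioo_subset_Icc_self hξ)
  refine ⟨ξ, hξI, hξ.1, hξ.2, ?_⟩
  have := (hpos ξ hξI).ne'
  field_simp
  linarith

/-- `g` lies above its tangent at `m` relative to `f` when `g' / f'` is nondecreasing. -/
lemma tangent_le {I : Set ℝ} (hI : I.OrdConnected) {f g f' g' : ℝ → ℝ}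
    (hf : ∀ x ∈ I, HasDerivWithinAt f (f' x) I x) (hg : ∀ x ∈ I, HasDerivWithinAt g (g' x) I x)
    (hpos : ∀ x ∈ I, 0 < f' x) (hmono : MonotoneOn (fun x => g' x / f' x) I)
    {m x : ℝ} (hm : m ∈ I) (hx : x ∈ I) :
    g' m / f' m * (f x - f m) ≤ g x - g m := by
  have hfm := strictMonoOn_of_deriv_within_pos hI hf hpos
  rcases lt_trichotomy m x with hlt | rfl | hlt
  · obtain ⟨ξ, hξ, h1, -, h⟩ := exists_ratio_eq hI hf hg hpos hm hx hlt
    rw [h]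
    exact mul_le_mul_of_nonneg_right (hmono hm hξ h1.le) (sub_pos.2 (hfm hm hx hlt)).le
  · simp
  · obtain ⟨ξ, hξ, -, h1, h⟩ := exists_ratio_eq hI hf hg hpos hx hm hlt
    have h2 := mul_le_mul_of_nonneg_right (hmono hξ hm h1.le) (sub_pos.2 (hfm hx hm hlt)).le
    simp only at h2
    linarith

/-- `g` lies strictly below its tangent at `m` relative to `f` when `g' / f'` is strictly
decreasing. -/
lemma lt_tangent {I : Set ℝ} (hI : I.OrdConnected) {f g f' g' : ℝ → ℝ}
    (hf : ∀ x ∈ I, HasDerivWithinAt f (f' x) I x) (hg : ∀ x ∈ I, HasDerivWithinAt g (g' x) I x)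
    (hpos : ∀ x ∈ I, 0 < f' x) (hanti : StrictAntiOn (fun x => g' x / f' x) I)
    {m x : ℝ} (hm : m ∈ I) (hx : x ∈ I) (hne : x ≠ m) :
    g x - g m < g' m / f' m * (f x - f m) := by
  have hfm := strictMonoOn_of_deriv_within_pos hI hf hpos
  rcases hne.symm.lt_or_gt with hlt | hlt
  · obtain ⟨ξ, hξ, h1, -, h⟩ := exists_ratio_eq hI hf hg hpos hm hx hlt
    rw [h]
    exact mul_lt_mul_of_pos_right (hanti hm hξ h1) (sub_pos.2 (hfm hm hx hlt))
  · obtain ⟨ξ, hξ, -, h1, h⟩ := exists_ratio_eq hI hf hg hpos hx hm hlt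
    have h2 := mul_lt_mul_of_pos_right (hanti hξ hm h1) (sub_pos.2 (hfm hx hm hlt))
    simp only at h2
    linarith

lemma hasDerivWithinAt_ratio {I : Set ℝ} {f' g' f'' g'' : ℝ → ℝ}
    (hf2 : ∀ x ∈ I, HasDerivWithinAt f' (f'' x) I x)
    (hg2 : ∀ x ∈ I, HasDerivWithinAt g' (g'' x) I x)
    (hfpos : ∀ x ∈ I, 0 < f' x) (hgpos : ∀ x ∈ I, 0 < g' x) {x : ℝ} (hx : x ∈ I) :
    HasDerivWithinAt (fun x => g' x / f' x)
      (g' x / f' x * (g'' x / g' x - f'' x / f' x)) I x := by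
  have h1 := (hfpos x hx).ne'
  have h2 := (hgpos x hx).ne'
  refine ((hg2 x hx).fun_div (hf2 x hx) h1).congr_deriv ?_
  field_simp

lemma ordConnected_uniqueDiffOn {I : Set ℝ} (hI : I.OrdConnected)
    (hne : ∃ x ∈ I, ∃ y ∈ I, x < y) : UniqueDiffOn ℝ I := by
  obtain ⟨x, hx, y, hy, hxy⟩ := hne
  refine uniqueDiffOn_convex hI.convex ⟨(x + y) / 2, mem_interior_iff_mem_nhds.2 ?_⟩
  exact mem_of_superset (Icc_mem_nhds (by linarith) (by linarith)) (hI.out hx hy)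

lemma implicitMeanLE_of_le {I : Set ℝ} (hI : I.OrdConnected) {f g f' g' f'' g'' : ℝ → ℝ}
    (hf : ∀ x ∈ I, HasDerivWithinAt f (f' x) I x)
    (hf2 : ∀ x ∈ I, HasDerivWithinAt f' (f'' x) I x)
    (hg : ∀ x ∈ I, HasDerivWithinAt g (g' x) I x)
    (hg2 : ∀ x ∈ I, HasDerivWithinAt g' (g'' x) I x)
    (hfpos : ∀ x ∈ I, 0 < f' x) (hgpos : ∀ x ∈ I, 0 < g' x)
    (hle : ∀ x ∈ I, f'' x / f' x ≤ g'' x / g' x) : ImplicitMeanLE I f g := by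
  have hmono : MonotoneOn (fun x => g' x / f' x) I :=
    monotoneOn_of_hasDerivWithinAt_nonneg hI.convex
      (fun x hx => (hasDerivWithinAt_ratio hf2 hg2 hfpos hgpos hx).continuousWithinAt)
      (fun x hx => (hasDerivWithinAt_ratio hf2 hg2 hfpos hgpos (interior_subset hx)).mono
        interior_subset)
      (fun x hx => mul_nonneg
        (div_pos (hgpos x (interior_subset hx)) (hfpos x (interior_subset hx))).le
        (sub_nonneg.2 (hle x (interior_subset hx))))
  intro n hn a ha m hm k hk h1 h2
  have hn0 : (0 : ℝ) < n := by positivity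
  have hs := Finset.sum_le_sum (s := Finset.univ) fun i _ =>
    tangent_le hI hf hg hfpos hmono hm (ha i)
  rw [← Finset.mul_sum, Finset.sum_sub_distrib, Finset.sum_sub_distrib, ← h1, ← h2] at hs
  simp only [Finset.sum_const, Finset.card_univ, Fintype.card_fin, nsmul_eq_mul, sub_self,
    mul_zero, ← mul_sub] at hs
  have : g m ≤ g k := sub_nonneg.1 (nonneg_of_mul_nonneg_right hs hn0)
  exact ((strictMonoOn_of_deriv_within_pos hI hg hgpos).le_iff_le hm hk).1 this

lemma le_of_implicitMeanLE {I : Set ℝ} (hI : I.OrdConnected)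
    (hne : ∃ x ∈ I, ∃ y ∈ I, x < y) {f g f' g' f'' g'' : ℝ → ℝ}
    (hf : ∀ x ∈ I, HasDerivWithinAt f (f' x) I x)
    (hf2 : ∀ x ∈ I, HasDerivWithinAt f' (f'' x) I x) (hfc : ContinuousOn f'' I)
    (hg : ∀ x ∈ I, HasDerivWithinAt g (g' x) I x)
    (hg2 : ∀ x ∈ I, HasDerivWithinAt g' (g'' x) I x) (hgc : ContinuousOn g'' I)
    (hfpos : ∀ x ∈ I, 0 < f' x) (hgpos : ∀ x ∈ I, 0 < g' x)
    (H : ImplicitMeanLE I f g) : ∀ x ∈ I, f'' x / f' x ≤ g'' x / g' x := by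
  intro x₀ hx₀
  by_contra! hlt
  have hcF : ContinuousWithinAt (fun x => f'' x / f' x) I x₀ :=
    (hfc x₀ hx₀).div (hf2 x₀ hx₀).continuousWithinAt (hfpos x₀ hx₀).ne'
  have hcG : ContinuousWithinAt (fun x => g'' x / g' x) I x₀ :=
    (hgc x₀ hx₀).div (hg2 x₀ hx₀).continuousWithinAt (hgpos x₀ hx₀).ne'
  obtain ⟨ε, hε, hball⟩ := Metric.mem_nhdsWithin_iff.1 (hcG.eventually_lt hcF hlt)
  set J : Set ℝ := Metric.ball x₀ ε ∩ I with hJdef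
  have hJI : J ⊆ I := inter_subset_right
  have hJ : J.OrdConnected := by
    rw [hJdef, Real.ball_eq_Ioo]
    exact ordConnected_Ioo.inter hI
  have hx₀J : x₀ ∈ J := ⟨Metric.mem_ball_self hε, hx₀⟩
  obtain ⟨z, hzJ, hz⟩ : ∃ z ∈ J, z ≠ x₀ := by
    have hacc := (ordConnected_uniqueDiffOn hI hne x₀ hx₀).accPt
    obtain ⟨z, ⟨h1, h2⟩, h3⟩ := accPt_iff_nhds.1 hacc _ (Metric.ball_mem_nhds x₀ hε)
    exact ⟨z, ⟨h1, h2⟩, h3⟩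
  have hanti : StrictAntiOn (fun x => g' x / f' x) J :=
    strictAntiOn_of_hasDerivWithinAt_neg hJ.convex
      (fun x hx => (hasDerivWithinAt_ratio hf2 hg2 hfpos hgpos (hJI hx)).continuousWithinAt.mono
        hJI)
      (fun x hx => (hasDerivWithinAt_ratio hf2 hg2 hfpos hgpos (hJI (interior_subset hx))).mono
        (interior_subset.trans hJI))
      (fun x hx => mul_neg_of_pos_of_neg
        (div_pos (hgpos x (hJI (interior_subset hx))) (hfpos x (hJI (interior_subset hx))))
        (sub_neg.2 (hball (interior_subset hx))))
  have hfJ : ∀ x ∈ J, HasDerivWithinAt f (f' x) J x := fun x hx => (hf x (hJI hx)).mono hJI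
  have hgJ : ∀ x ∈ J, HasDerivWithinAt g (g' x) J x := fun x hx => (hg x (hJI hx)).mono hJI
  have hfp : ∀ x ∈ J, 0 < f' x := fun x hx => hfpos x (hJI hx)
  have hgp : ∀ x ∈ J, 0 < g' x := fun x hx => hgpos x (hJI hx)
  have ha : ∀ i, (![x₀, z] : Fin 2 → ℝ) i ∈ J := by
    intro i
    fin_cases i
    · exact hx₀J
    · exact hzJ
  obtain ⟨m, hm, h1⟩ :=
    exists_mean hJ (fun x hx => (hfJ x hx).continuousWithinAt) (by norm_num) ha
  obtain ⟨k, hk, h2⟩ :=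
    exists_mean hJ (fun x hx => (hgJ x hx).continuousWithinAt) (by norm_num) ha
  have hmk : m ≤ k := H 2 (by norm_num) _ (fun i => hJI (ha i)) m (hJI hm) k (hJI hk)
    (by rw [h1]; push_cast; ring) (by rw [h2]; push_cast; ring)
  have hgmk := (strictMonoOn_of_deriv_within_pos hJ hgJ hgp).monotoneOn hm hk hmk
  simp only [Fin.sum_univ_two, Matrix.cons_val_zero, Matrix.cons_val_one]
    at h1 h2
  -- The mean `m` differs from both points, because `f` is injective.
  have hinj := (strictMonoOn_of_deriv_within_pos hJ hfJ hfp).injOn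
  have hfne : f x₀ ≠ f z := fun h => hz (hinj hx₀J hzJ h).symm
  have hne1 : x₀ ≠ m := by
    rintro rfl
    exact hfne (by linarith)
  have hne2 : z ≠ m := by
    rintro rfl
    exact hfne (by linarith)
  have t1 := lt_tangent hJ hfJ hgJ hfp hanti hm hx₀J hne1
  have t2 := lt_tangent hJ hfJ hgJ hfp hanti hm hzJ hne2
  have t3 : g' m / f' m * (f x₀ - f m) + g' m / f' m * (f z - f m) = 0 := by
    rw [h1]; ring
  linarith

lemma exists_mul_deriv_pos {I : Set ℝ} (hI : I.OrdConnected)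
    (hne : ∃ x ∈ I, ∃ y ∈ I, x < y) {f f' : ℝ → ℝ}
    (hf : ∀ x ∈ I, HasDerivWithinAt f (f' x) I x) (hf0 : ∀ x ∈ I, f' x ≠ 0)
    (hfm : StrictMonoOrAntiOn f I) : ∃ c : ℝ, c ≠ 0 ∧ ∀ x ∈ I, 0 < c * f' x := by
  have hu := ordConnected_uniqueDiffOn hI hne
  rcases hfm with h | h
  · refine ⟨1, one_ne_zero, fun x hx => ?_⟩
    have h1 : 0 ≤ derivWithin f I x := h.monotoneOn.derivWithin_nonneg
    rw [(hf x hx).derivWithin (hu x hx)] at h1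
    rw [one_mul]
    exact lt_of_le_of_ne h1 (hf0 x hx).symm
  · refine ⟨-1, by norm_num, fun x hx => ?_⟩
    have h1 : derivWithin f I x ≤ 0 := h.antitoneOn.derivWithin_nonpos
    rw [(hf x hx).derivWithin (hu x hx)] at h1
    have := lt_of_le_of_ne h1 (hf0 x hx)
    linarith

/-- Mikusiński: for twice continuously differentiable, strictly
monotone `f, g` with nonvanishing first derivatives,
`A^[f] ≤ A^[g]` iff `f''/f' ≤ g''/g'` on `I`. -/
theorem qam_le_iff_mikusinski
    (I : Set ℝ) (hI : I.OrdConnected) (hInontriv : ∃ x ∈ I, ∃ y ∈ I, x < y)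
    (f g f' g' f'' g'' : ℝ → ℝ)
    (hfd : ∀ x ∈ I, HasDerivWithinAt f (f' x) I x)
    (hfd2 : ∀ x ∈ I, HasDerivWithinAt f' (f'' x) I x)
    (hf''c : ContinuousOn f'' I)
    (hgd : ∀ x ∈ I, HasDerivWithinAt g (g' x) I x)
    (hgd2 : ∀ x ∈ I, HasDerivWithinAt g' (g'' x) I x)
    (hg''c : ContinuousOn g'' I)
    (hf'0 : ∀ x ∈ I, f' x ≠ 0) (hg'0 : ∀ x ∈ I, g' x ≠ 0)
    (hfm : StrictMonoOrAntiOn f I) (hgm : StrictMonoOrAntiOn g I) :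
    qamLE I f g ↔ ∀ x ∈ I, f'' x / f' x ≤ g'' x / g' x := by
  have hfi : InjOn f I := hfm.elim StrictMonoOn.injOn StrictAntiOn.injOn
  have hgi : InjOn g I := hgm.elim StrictMonoOn.injOn StrictAntiOn.injOn
  obtain ⟨c, hc, hcpos⟩ := exists_mul_deriv_pos hI hInontriv hfd hf'0 hfm
  obtain ⟨d, hd, hdpos⟩ := exists_mul_deriv_pos hI hInontriv hgd hg'0 hgm
  have hf1 := fun x hx => (hfd x hx).const_mul c
  have hf2 := fun x hx => (hfd2 x hx).const_mul c
  have hg1 := fun x hx => (hgd x hx).const_mul d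
  have hg2 := fun x hx => (hgd2 x hx).const_mul d
  rw [qamLE_iff_implicitMeanLE hI (fun x hx => (hfd x hx).continuousWithinAt)
    (fun x hx => (hgd x hx).continuousWithinAt) hfi hgi, ← implicitMeanLE_mul_iff hc hd]
  have hquot : (∀ x ∈ I, f'' x / f' x ≤ g'' x / g' x) ↔
      ∀ x ∈ I, c * f'' x / (c * f' x) ≤ d * g'' x / (d * g' x) := by
    simp only [mul_div_mul_left _ _ hc, mul_div_mul_left _ _ hd]
  rw [hquot]
  exact ⟨le_of_implicitMeanLE hI hInontriv hf1 hf2 (hf''c.const_mul c) hg1 hg2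
      (hg''c.const_mul d) hcpos hdpos,
    implicitMeanLE_of_le hI hf1 hf2 hg1 hg2 hcpos hdpos⟩
end
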